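/- arXiv:1911.02544 — 2 statements merged into one kernel-verified Lean document; each statement's English description precedes it below -/
import Mathlib

section
/- Let A be a strongly ISP-ring and let I be a proper invertible radical ideal of A. Then I is zero-dimensional: every prime ideal of A containing I is a maximal ideal (equivalently, the quotient ring A/I is zero-dimensional). -/
/-- An ideal is *regular* if it contains a regular element (a non-zero-divisor). -/
def Ideal.IsRegularIdeal {A : Type*} [CommRing A] (I : Ideal A) : Prop :=
  ∃ a ∈ I, a ∈ nonZeroDivisors A

/-- An ideal is *invertible* if it is regular, finitely generated and locally principal. -/
def Ideal.IsInvertibleIdeal {A : Type*} [CommRing A] (J : Ideal A) : Prop :=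
  J.IsRegularIdeal ∧ J.FG ∧
    ∀ M : Ideal A, ∀ hM : M.IsMaximal,
      haveI := hM.isPrime
      (J.map (algebraMap A (Localization.AtPrime M))).IsPrincipal

/-- `I` can be written as an invertible ideal times a nonempty product of
proper radical ideals. -/
def Ideal.HasISPFactorization {A : Type*} [CommRing A] (I : Ideal A) : Prop :=
  ∃ (J : Ideal A) (L : List (Ideal A)), J.IsInvertibleIdeal ∧ L ≠ [] ∧
    (∀ H ∈ L, H ≠ ⊤ ∧ H.IsRadical) ∧ I = J * L.prod

/-- An ISP-ring: every proper regular ideal factors as an invertible ideal times a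
nonempty product of proper radical ideals. -/
def IsISPRing (A : Type*) [CommRing A] : Prop :=
  ∀ I : Ideal A, I ≠ ⊤ → I.IsRegularIdeal → I.HasISPFactorization

/-- A strongly ISP-ring: every proper ideal factors as an invertible ideal times a
nonempty product of proper radical ideals. -/
def IsStronglyISPRing (A : Type*) [CommRing A] : Prop :=
  ∀ I : Ideal A, I ≠ ⊤ → I.HasISPFactorization

/-- An ISP-domain: an integral domain in which every proper nonzero ideal factors as an
invertible ideal times a nonempty product of proper radical ideals. -/
def IsISPDomain (A : Type*) [CommRing A] : Prop :=
  IsDomain A ∧ ∀ I : Ideal A, I ≠ ⊤ → I ≠ ⊥ → I.HasISPFactorization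

/-!
Zero-dimensionality of `A ⧸ I` amounts to `(I : x) + (x) = A` for all `x`. If this fails for some
`x`, put `N = (I : x)` and localize at a minimal prime `Q` of `J = N + (x)`. There `I` becomes
`(t)` with `t` regular, and a radical ideal containing a power of `J` becomes the unit ideal or the
maximal ideal `𝔪`. Hence the factorization of any `Y` with `J ^ 3 ≤ Y ≤ J` localizes to
`(j) * 𝔪 ^ k`. Modulo the radical ideal `(t)` the ideal `J`, hence also `Y`, has zero annihilator;
as `j` divides a power of `t`, this makes `j` a unit. So the localizations of `N + (x) ^ 2` and
`N ^ 2 + (x)` are powers of `𝔪`, hence comparable, and in either case Nakayama's lemma gives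
`x ∈ N` and then `x ∈ (t)`. Thus `N` localizes to the unit ideal, although `N ≤ Q`.
-/

section RadicalColon

variable {A : Type*} [CommRing A] {I J K : Ideal A} {t x j : A}

theorem colon_le_colon_of_pow_le (hI : I.IsRadical) {n : ℕ} (h : J ^ n ≤ K) :
    I.colon (K : Set A) ≤ I.colon (J : Set A) := by
  intro b hb
  refine Submodule.mem_colon.2 fun y hy ↦ hI ⟨n + 1, ?_⟩
  have hby : b * y ^ n ∈ I := Submodule.mem_colon.1 hb _ (h (Ideal.pow_mem_pow hy n))
  have : (b • y) ^ (n + 1) = b ^ n * y * (b * y ^ n) := by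
    rw [smul_eq_mul]
    ring
  exact this ▸ I.mul_mem_left _ hby

theorem colon_colon_sup_span_le (hI : I.IsRadical) (x : A) :
    I.colon ((I.colon {x} ⊔ Ideal.span {x} : Ideal A) : Set A) ≤ I := by
  intro b hb
  rw [Submodule.mem_colon] at hb
  have hbx : b ∈ I.colon {x} :=
    Submodule.mem_colon_singleton.2 (hb x (Ideal.mem_sup_right (Ideal.mem_span_singleton_self x)))
  exact hI ⟨2, by simpa only [pow_two, smul_eq_mul] using hb b (Ideal.mem_sup_left hbx)⟩

theorem mem_of_mem_colon_self (hI : I.IsRadical) (hx : x ∈ I.colon {x}) : x ∈ I :=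
  hI ⟨2, by simpa only [pow_two, smul_eq_mul] using Submodule.mem_colon_singleton.1 hx⟩

theorem span_mul_colon_le (I : Ideal A) (x : A) : Ideal.span {x} * I.colon {x} ≤ I := by
  refine Ideal.span_singleton_mul_le_iff.2 fun b hb ↦ ?_
  rw [mul_comm]
  exact Submodule.mem_colon_singleton.1 hb

theorem colon_le_sup_span_mul_colon (hI : I.IsRadical) (hK : K ≤ I.colon {x})
    (h : I.colon {x} ≤ K ⊔ Ideal.span {x}) :
    I.colon {x} ≤ K ⊔ Ideal.span {x} * I.colon {x} := by
  intro y hy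
  obtain ⟨z, hz, w, hw, rfl⟩ := Submodule.mem_sup.1 (h hy)
  obtain ⟨a, rfl⟩ := Ideal.mem_span_singleton'.1 hw
  have hax : a * x ∈ I.colon {x} := by
    simpa only [add_sub_cancel_left] using sub_mem hy (hK hz)
  have ha : a ∈ I.colon {x} := by
    rw [Submodule.mem_colon_singleton, smul_eq_mul] at hax ⊢
    refine hI ⟨2, ?_⟩
    have : (a * x) ^ 2 = a * (a * x * x) := by ring
    exact this ▸ I.mul_mem_left a hax
  refine add_mem (Ideal.mem_sup_left hz) (Ideal.mem_sup_right ?_)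
  rw [mul_comm a x]
  exact Ideal.mul_mem_mul (Ideal.mem_span_singleton_self x) ha

theorem sup_cube_le_sup_sq (I J : Ideal A) : (I ⊔ J) ^ 3 ≤ I ⊔ J ^ 2 := by
  simpa only [pow_one] using Ideal.sup_pow_add_le_pow_sup_pow (I := I) (J := J) (n := 1) (m := 2)

theorem sup_cube_le_sq_sup (I J : Ideal A) : (I ⊔ J) ^ 3 ≤ I ^ 2 ⊔ J := by
  simpa only [pow_one] using Ideal.sup_pow_add_le_pow_sup_pow (I := I) (J := J) (n := 2) (m := 1)

theorem isUnit_of_dvd_pow (ht : t ∈ nonZeroDivisors A) (hj : ∀ b, t ∣ b * j → t ∣ b) {n : ℕ}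
    (h : j ∣ t ^ n) : IsUnit j := by
  induction n with
  | zero => exact isUnit_of_dvd_one (by simpa only [pow_zero] using h)
  | succ n ih =>
    obtain ⟨c, hc⟩ := h
    obtain ⟨d, rfl⟩ := hj c ⟨t ^ n, by rw [mul_comm c, ← hc, pow_succ']⟩
    refine ih ⟨d, (mul_cancel_left_mem_nonZeroDivisors ht).1 ?_⟩
    rw [← pow_succ', hc, mul_left_comm]

theorem isUnit_of_pow_colon_sup_span_le (ht : t ∈ nonZeroDivisors A)
    (hrad : (Ideal.span {t}).IsRadical) {n : ℕ}
    (h : ((Ideal.span {t}).colon {x} ⊔ Ideal.span {x}) ^ n ≤ Ideal.span {j}) : IsUnit j := by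
  have htJ : t ∈ (Ideal.span {t}).colon {x} ⊔ Ideal.span {x} :=
    Ideal.mem_sup_left (Ideal.le_colon (Ideal.mem_span_singleton_self t))
  refine isUnit_of_dvd_pow ht (fun b hb ↦ ?_)
    (Ideal.mem_span_singleton.1 (h (Ideal.pow_mem_pow htJ n)))
  have hbj : b ∈ (Ideal.span {t}).colon (Ideal.span {j} : Set A) := by
    rw [Ideal.colon_span, Submodule.mem_colon_singleton]
    exact Ideal.mem_span_singleton.2 hb
  exact Ideal.mem_span_singleton.1
    (colon_colon_sup_span_le hrad x (colon_le_colon_of_pow_le hrad h hbj))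

theorem mem_of_mem_sup_span_sq (hx : x ∈ (⊥ : Ideal A).jacobson)
    (h : x ∈ K ⊔ Ideal.span {x} ^ 2) : x ∈ K := by
  rw [← Ideal.span_singleton_le_iff_mem] at hx h ⊢
  refine Submodule.le_of_le_smul_of_le_jacobson_bot (Submodule.fg_span_singleton x) hx ?_
  rwa [smul_eq_mul, ← pow_two]

theorem mem_colon_of_colon_le_sq_sup_span (ht : t ∈ nonZeroDivisors A)
    (hrad : (Ideal.span {t}).IsRadical) (hx : x ∈ (⊥ : Ideal A).jacobson)
    (h : (Ideal.span {t}).colon {x} ≤ (Ideal.span {t}).colon {x} ^ 2 ⊔ Ideal.span {x}) :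
    x ∈ (Ideal.span {t}).colon {x} := by
  set T := Ideal.span {t}
  set X := Ideal.span {x}
  set N := T.colon {x}
  have hXN : X * N ≤ T := span_mul_colon_le T x
  have hN : N ≤ N ^ 2 ⊔ X * N := colon_le_sup_span_mul_colon hrad (Ideal.pow_le_self two_ne_zero) h
  have hT : T ≤ N ^ 2 ⊔ X * T := calc
    T ≤ N := Ideal.le_colon
    _ ≤ N ^ 2 ⊔ X * (N ^ 2 ⊔ X * N) := hN.trans (sup_le_sup_left (Ideal.mul_mono_right hN) _)
    _ ≤ N ^ 2 ⊔ X * (N ^ 2 ⊔ T) := by gcongr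
    _ ≤ N ^ 2 ⊔ X * T := by
      rw [Ideal.mul_sup, ← sup_assoc]
      exact sup_le_sup_right (sup_le le_rfl Ideal.mul_le_right) _
  have hTN : T ≤ N ^ 2 :=
    Submodule.le_of_le_smul_of_le_jacobson_bot (Submodule.fg_span_singleton t)
      ((Ideal.span_singleton_le_iff_mem _).2 hx) hT
  have hXT : X * T ≤ T * N := calc
    X * T ≤ X * (N * N) := Ideal.mul_mono_right (hTN.trans_eq (pow_two N))
    _ = X * N * N := (mul_assoc X N N).symm
    _ ≤ T * N := Ideal.mul_mono_left hXN
  obtain ⟨v, hv, htv⟩ := Ideal.mem_span_singleton_mul.1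
    (hXT (Ideal.mul_mem_mul (Ideal.mem_span_singleton_self x) (Ideal.mem_span_singleton_self t)))
  rw [mul_comm x t] at htv
  exact (mul_cancel_left_mem_nonZeroDivisors ht).1 htv ▸ hv

theorem mem_span_singleton_of_colon_sup_eq_span_mul_pow (ht : t ∈ nonZeroDivisors A)
    (hrad : (Ideal.span {t}).IsRadical) (hx : x ∈ (⊥ : Ideal A).jacobson) {𝔪 : Ideal A}
    (h₁ : ∃ j k, (Ideal.span {t}).colon {x} ⊔ Ideal.span {x} ^ 2 = Ideal.span {j} * 𝔪 ^ k)
    (h₂ : ∃ j k, (Ideal.span {t}).colon {x} ^ 2 ⊔ Ideal.span {x} = Ideal.span {j} * 𝔪 ^ k) :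
    x ∈ Ideal.span {t} := by
  set N := (Ideal.span {t}).colon {x}
  have eq_pow {Y : Ideal A} (hY : (N ⊔ Ideal.span {x}) ^ 3 ≤ Y) :
      (∃ j k, Y = Ideal.span {j} * 𝔪 ^ k) → ∃ k, Y = 𝔪 ^ k := by
    rintro ⟨j, k, rfl⟩
    have hj : IsUnit j := isUnit_of_pow_colon_sup_span_le ht hrad (hY.trans Ideal.mul_le_left)
    exact ⟨k, by rw [Ideal.span_singleton_eq_top.2 hj, Ideal.top_mul]⟩
  obtain ⟨b, hb⟩ := eq_pow (sup_cube_le_sup_sq N _) h₁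
  obtain ⟨c, hc⟩ := eq_pow (sup_cube_le_sq_sup N _) h₂
  refine mem_of_mem_colon_self hrad ?_
  rcases le_total c b with hcb | hbc
  · have hle : N ⊔ Ideal.span {x} ^ 2 ≤ N ^ 2 ⊔ Ideal.span {x} :=
      hb ▸ hc ▸ Ideal.pow_le_pow_right hcb
    exact mem_colon_of_colon_le_sq_sup_span ht hrad hx (le_sup_left.trans hle)
  · have hle : N ^ 2 ⊔ Ideal.span {x} ≤ N ⊔ Ideal.span {x} ^ 2 :=
      hb ▸ hc ▸ Ideal.pow_le_pow_right hbc
    exact mem_of_mem_sup_span_sq hx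
      (hle (Ideal.mem_sup_right (Ideal.mem_span_singleton_self x)))

theorem isMaximal_of_forall_colon_sup_span_eq_top {I : Ideal A}
    (hI : ∀ x, I.colon {x} ⊔ Ideal.span {x} = ⊤) {P : Ideal A} (hP : P.IsPrime) (hIP : I ≤ P) :
    P.IsMaximal := by
  obtain ⟨M, hM, hPM⟩ := Ideal.exists_le_maximal P hP.ne_top
  suffices hMP : M ≤ P from hPM.antisymm hMP ▸ hM
  intro x hxM
  by_contra hxP
  have hNP : I.colon {x} ≤ P := fun b hb ↦
    (hP.mem_or_mem (hIP (Submodule.mem_colon_singleton.1 hb))).resolve_right hxP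
  exact hM.ne_top (top_le_iff.1 (hI x ▸
    sup_le (hNP.trans hPM) ((Ideal.span_singleton_le_iff_mem M).2 hxM)))

end RadicalColon

section Localization

variable {A : Type*} [CommRing A]

theorem map_colon_singleton_of_isLocalization (S : Submonoid A) (B : Type*) [CommRing B]
    [Algebra A B] [IsLocalization S B] (I : Ideal A) (x : A) :
    (I.colon {x}).map (algebraMap A B) = (I.map (algebraMap A B)).colon {algebraMap A B x} := by
  apply le_antisymm
  · refine Ideal.map_le_iff_le_comap.2 fun b hb ↦ ?_
    rw [Ideal.mem_comap, Submodule.mem_colon_singleton, smul_eq_mul, ← map_mul]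
    exact Ideal.mem_map_of_mem _ (Submodule.mem_colon_singleton.1 hb)
  · intro b hb
    obtain ⟨a, s, rfl⟩ := IsLocalization.exists_mk'_eq S b
    rw [Submodule.mem_colon_singleton, smul_eq_mul, mul_comm, IsLocalization.mul_mk'_eq_mk'_of_mul,
      IsLocalization.mk'_mem_map_algebraMap_iff] at hb
    obtain ⟨u, hu, hua⟩ := hb
    refine (IsLocalization.mk'_mem_map_algebraMap_iff S B _ _ _).2 ⟨u, hu, ?_⟩
    rwa [Submodule.mem_colon_singleton, smul_eq_mul, mul_assoc, mul_comm a]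

theorem isPrincipal_map_atPrime {I : Ideal A}
    (hI : ∀ (M : Ideal A) [M.IsMaximal],
      (I.map (algebraMap A (Localization.AtPrime M))).IsPrincipal)
    (Q : Ideal A) [Q.IsPrime] : (I.map (algebraMap A (Localization.AtPrime Q))).IsPrincipal := by
  obtain ⟨M, hM, hQM⟩ := Ideal.exists_le_maximal Q (Ideal.IsPrime.ne_top inferInstance)
  have hcompl : M.primeCompl ≤ Q.primeCompl.comap (RingHom.id A) := fun _ hy hyQ ↦ hy (hQM hyQ)
  have hprin := (hI M).map_ringHom (IsLocalization.map (Localization.AtPrime Q) _ hcompl)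
  rwa [Ideal.map_map, IsLocalization.map_comp, RingHom.comp_id] at hprin

theorem isRadical_map_of_isLocalization (S : Submonoid A) (B : Type*) [CommRing B] [Algebra A B]
    [IsLocalization S B] {I : Ideal A} (hI : I.IsRadical) :
    (I.map (algebraMap A B)).IsRadical := by
  rw [← Ideal.radical_eq_iff, ← IsLocalization.map_radical S B, hI.radical]

theorem mem_nonZeroDivisors_of_map_eq_span (S : Submonoid A) (B : Type*) [CommRing B]
    [Algebra A B] [IsLocalization S B] {I : Ideal A} (hI : I.IsRegularIdeal) {t : B}
    (ht : I.map (algebraMap A B) = Ideal.span {t}) : t ∈ nonZeroDivisors B := by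
  obtain ⟨a, haI, ha⟩ := hI
  obtain ⟨c, hc⟩ := Ideal.mem_span_singleton.1 (ht ▸ Ideal.mem_map_of_mem (algebraMap A B) haI)
  have hreg : algebraMap A B a ∈ nonZeroDivisors B :=
    IsLocalization.map_nonZeroDivisors_le S B (Submonoid.mem_map_of_mem _ ha)
  exact (mul_mem_nonZeroDivisors.1 (hc ▸ hreg)).1

theorem map_atPrime_eq_top_or_eq_maximalIdeal {Q Y H : Ideal A} [Q.IsPrime]
    (hQ : Q ∈ Y.minimalPrimes) (hH : H.IsRadical) (hYH : Y ≤ H) :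
    H.map (algebraMap A (Localization.AtPrime Q)) = ⊤ ∨
      H.map (algebraMap A (Localization.AtPrime Q)) =
        IsLocalRing.maximalIdeal (Localization.AtPrime Q) := by
  refine or_iff_not_imp_left.2 fun htop ↦ (IsLocalRing.le_maximalIdeal htop).antisymm ?_
  rw [← Localization.AtPrime.map_eq_maximalIdeal,
    ← IsLocalization.AtPrime.radical_map_of_mem_minimalPrimes _ Q Y hQ,
    (isRadical_map_of_isLocalization Q.primeCompl _ hH).radical_le_iff]
  exact Ideal.map_mono hYH

theorem exists_map_atPrime_eq_span_mul_pow {Q Y : Ideal A} [Q.IsPrime]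
    (hY : Y.HasISPFactorization) (hQ : Q ∈ Y.minimalPrimes) :
    ∃ j k, Y.map (algebraMap A (Localization.AtPrime Q)) =
      Ideal.span {j} * IsLocalRing.maximalIdeal (Localization.AtPrime Q) ^ k := by
  obtain ⟨J, L, ⟨-, -, hJ⟩, -, hL, hYJL⟩ := hY
  obtain ⟨j, hj⟩ := (isPrincipal_map_atPrime (fun M hM ↦ hJ M hM) Q).principal
  have hprod : L.prod.map (algebraMap A (Localization.AtPrime Q)) ∈
      Submonoid.powers (IsLocalRing.maximalIdeal (Localization.AtPrime Q)) := by
    rw [← Ideal.mapHom_apply, map_list_prod]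
    refine Submonoid.list_prod_mem _ (List.forall_mem_map.2 fun H hH ↦ ?_)
    have hYH : Y ≤ H :=
      hYJL.trans_le (Ideal.mul_le_right.trans (Ideal.le_of_dvd (List.dvd_prod hH)))
    rcases map_atPrime_eq_top_or_eq_maximalIdeal hQ (hL H hH).2 hYH with htop | hmax
    · rw [Ideal.mapHom_apply, htop, ← Ideal.one_eq_top]
      exact one_mem _
    · rw [Ideal.mapHom_apply, hmax]
      exact Submonoid.mem_powers _
  obtain ⟨k, hk⟩ := hprod
  refine ⟨j, k, ?_⟩
  rw [hYJL, Ideal.map_mul, hj, ← hk]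

theorem mem_minimalPrimes_of_pow_le_of_le {J Y Q : Ideal A} (hQ : Q ∈ J.minimalPrimes) {n : ℕ}
    (hJY : J ^ n ≤ Y) (hYJ : Y ≤ J) : Q ∈ Y.minimalPrimes :=
  ⟨⟨hQ.1.1, hYJ.trans hQ.1.2⟩, fun _ hP hPQ ↦
    haveI := hP.1
    hQ.2 ⟨hP.1, Ideal.IsPrime.le_of_pow_le (hJY.trans hP.2)⟩ hPQ⟩

theorem isRegularIdeal_of_pow_le {J Y : Ideal A} (hJ : J.IsRegularIdeal) {n : ℕ} (h : J ^ n ≤ Y) :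
    Y.IsRegularIdeal := by
  obtain ⟨a, haJ, ha⟩ := hJ
  exact ⟨a ^ n, h (Ideal.pow_mem_pow haJ n), pow_mem ha n⟩

end Localization

namespace IsISPRing

variable {A : Type*} [CommRing A] {I : Ideal A}

theorem exists_map_atPrime_eq_span_mul_pow_of_pow_le (hA : IsISPRing A) {J Y Q : Ideal A}
    [hQp : Q.IsPrime] (hJ : J.IsRegularIdeal) (hQ : Q ∈ J.minimalPrimes) {n : ℕ}
    (hJY : J ^ n ≤ Y) (hYJ : Y ≤ J) :
    ∃ j k, Y.map (algebraMap A (Localization.AtPrime Q)) =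
      Ideal.span {j} * IsLocalRing.maximalIdeal (Localization.AtPrime Q) ^ k :=
  have hYtop : Y ≠ ⊤ := ne_top_of_le_ne_top hQp.ne_top (hYJ.trans hQ.1.2)
  exists_map_atPrime_eq_span_mul_pow (hA Y hYtop (isRegularIdeal_of_pow_le hJ hJY))
    (mem_minimalPrimes_of_pow_le_of_le hQ hJY hYJ)

theorem algebraMap_mem_map_of_mem_minimalPrimes (hA : IsISPRing A) (hreg : I.IsRegularIdeal)
    (hprin : ∀ (M : Ideal A) [M.IsMaximal],
      (I.map (algebraMap A (Localization.AtPrime M))).IsPrincipal)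
    (hrad : I.IsRadical) {x : A} {Q : Ideal A} [Q.IsPrime]
    (hQ : Q ∈ (I.colon {x} ⊔ Ideal.span {x}).minimalPrimes) :
    algebraMap A (Localization.AtPrime Q) x ∈ I.map (algebraMap A (Localization.AtPrime Q)) := by
  set f := algebraMap A (Localization.AtPrime Q)
  have hJreg : (I.colon {x} ⊔ Ideal.span {x}).IsRegularIdeal :=
    hreg.imp fun a ha ↦ ⟨Ideal.mem_sup_left (Ideal.le_colon ha.1), ha.2⟩
  have hfx : f x ∈ IsLocalRing.maximalIdeal (Localization.AtPrime Q) := by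
    rw [← Localization.AtPrime.map_eq_maximalIdeal]
    exact Ideal.mem_map_of_mem f
      (hQ.1.2 (Ideal.mem_sup_right (Ideal.mem_span_singleton_self x)))
  obtain ⟨t, ht : I.map f = Ideal.span {t}⟩ := (isPrincipal_map_atPrime hprin Q).principal
  have hcolon : (Ideal.span {t}).colon {f x} = (I.colon {x}).map f := by
    rw [map_colon_singleton_of_isLocalization Q.primeCompl, ht]
  have hspan : Ideal.span {f x} = (Ideal.span {x}).map f := by
    rw [Ideal.map_span, Set.image_singleton]
  have htrad : (Ideal.span {t}).IsRadical :=
    ht ▸ isRadical_map_of_isLocalization Q.primeCompl _ hrad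
  rw [ht]
  refine mem_span_singleton_of_colon_sup_eq_span_mul_pow
    (mem_nonZeroDivisors_of_map_eq_span Q.primeCompl _ hreg ht) htrad
    (IsLocalRing.maximalIdeal_le_jacobson _ hfx)
    (𝔪 := IsLocalRing.maximalIdeal (Localization.AtPrime Q)) ?_ ?_ <;>
    rw [hcolon, hspan, ← Ideal.map_pow, ← Ideal.map_sup]
  · exact hA.exists_map_atPrime_eq_span_mul_pow_of_pow_le hJreg hQ (sup_cube_le_sup_sq _ _)
      (sup_le_sup_left (Ideal.pow_le_self two_ne_zero) _)
  · exact hA.exists_map_atPrime_eq_span_mul_pow_of_pow_le hJreg hQ (sup_cube_le_sq_sup _ _)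
      (sup_le_sup_right (Ideal.pow_le_self two_ne_zero) _)

theorem colon_sup_span_eq_top (hA : IsISPRing A) (hreg : I.IsRegularIdeal)
    (hprin : ∀ (M : Ideal A) [M.IsMaximal],
      (I.map (algebraMap A (Localization.AtPrime M))).IsPrincipal)
    (hrad : I.IsRadical) (x : A) : I.colon {x} ⊔ Ideal.span {x} = ⊤ := by
  by_contra hne
  obtain ⟨Q, hQ⟩ := Ideal.nonempty_minimalPrimes hne
  have hQp : Q.IsPrime := hQ.1.1
  obtain ⟨u, huQ, hux⟩ := (IsLocalization.algebraMap_mem_map_algebraMap_iff Q.primeCompl _ _ _).1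
    (hA.algebraMap_mem_map_of_mem_minimalPrimes hreg hprin hrad hQ)
  exact huQ (hQ.1.2 (Ideal.mem_sup_left (Submodule.mem_colon_singleton.2 hux)))

end IsISPRing

theorem invertible_radical_zero_dimensional_of_stronglyISPRing_general {A : Type*} [CommRing A]
    (hisp : IsISPRing A) (I : Ideal A) (hreg : I.IsRegularIdeal)
    (hprin : ∀ (M : Ideal A) [M.IsMaximal],
      (I.map (algebraMap A (Localization.AtPrime M))).IsPrincipal)
    (hrad : I.IsRadical) :
    ∀ P : Ideal A, P.IsPrime → I ≤ P → P.IsMaximal := fun _ hP hIP ↦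
  isMaximal_of_forall_colon_sup_span_eq_top (hisp.colon_sup_span_eq_top hreg hprin hrad) hP hIP

/-- Any proper invertible radical ideal of a strongly ISP-ring is zero-dimensional:
every prime ideal containing it is maximal. -/
theorem invertible_radical_zero_dimensional_of_stronglyISPRing {A : Type*} [CommRing A]
    (hisp : IsStronglyISPRing A)
    (I : Ideal A) (hI : I ≠ ⊤) (hinv : I.IsInvertibleIdeal) (hrad : I.IsRadical) :
    ∀ P : Ideal A, P.IsPrime → I ≤ P → P.IsMaximal :=
  invertible_radical_zero_dimensional_of_stronglyISPRing_general (fun J hJ _ ↦ hisp J hJ) I hinv.1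
    (fun M hM ↦ hinv.2.2 M hM) hrad
end

section
/- A commutative ring A is a ZPI-ring (i.e., every proper ideal of A is a product of prime ideals) if and only if A is a Noetherian strongly ISP-ring. -/
/-!
Both conditions force `M ^ 2 ⩿ M` for every maximal ideal `M`.

If `A` is Noetherian, this makes `M` locally principal, so every `I ≤ M` equals `M * (I : M)` and
Noetherian induction can peel off maximal factors. It gets stuck only when `M * I = I` for all
maximal `M ≥ I`; then `I` is idempotent and splits as `(I + (a)) * (I + (b))` whenever `a * b ∈ I`.

Conversely, in a localization of a ZPI-ring at a maximal ideal, the maximal ideal is principal and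
every other prime is zero. Hence for each prime `P` some finitely generated `F ≤ P` agrees with `P`
locally at every maximal `M ≥ P`. The prime factors of `F` that do not contain `P` multiply to an
ideal comaximal with `P`, so adjoining one element of `P` to `F` yields all of `P`. By Cohen's
theorem `A` is Noetherian.
-/

/-- A *ZPI-ring*: every proper ideal is a product of prime ideals. The product is taken over a
list, so that repeated factors are allowed and the unit ideal is the empty product. -/
def IsZPIRing (A : Type*) [CommRing A] : Prop :=
  ∀ I : Ideal A, I ≠ ⊤ → ∃ L : List (Ideal A), (∀ P ∈ L, P.IsPrime) ∧ I = L.prod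

section Products

variable {A : Type*} [CommRing A]

theorem list_prod_le_of_mem {L : List (Ideal A)} {P : Ideal A} (hP : P ∈ L) : L.prod ≤ P :=
  Ideal.le_of_dvd (List.dvd_prod hP)

theorem exists_mem_le_of_list_prod_le {L : List (Ideal A)} {P : Ideal A} [hP : P.IsPrime]
    (h : L.prod ≤ P) : ∃ Q ∈ L, Q ≤ P := by
  rw [← Multiset.prod_coe, hP.multiset_prod_le] at h
  exact h

theorem isZPIRing_iff_forall_mem_closure :
    IsZPIRing A ↔ ∀ I : Ideal A, I ∈ Submonoid.closure {P : Ideal A | P.IsPrime} := by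
  refine ⟨fun hA I => ?_, fun h I _ => ?_⟩
  · by_cases hI : I = ⊤
    · rw [hI, ← Ideal.one_eq_top]
      exact one_mem _
    · obtain ⟨L, hL, rfl⟩ := hA I hI
      exact Submonoid.list_prod_mem _ fun P hP => Submonoid.subset_closure (hL P hP)
  · obtain ⟨L, hL, hLI⟩ := Submonoid.exists_list_of_mem_closure (h I)
    exact ⟨L, hL, hLI.symm⟩

theorem IsZPIRing.exists_list_prod_eq (hA : IsZPIRing A) (I : Ideal A) :
    ∃ L : List (Ideal A), (∀ P ∈ L, P.IsPrime) ∧ L.prod = I :=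
  Submonoid.exists_list_of_mem_closure (isZPIRing_iff_forall_mem_closure.1 hA I)

theorem IsZPIRing.isStronglyISPRing (hA : IsZPIRing A) : IsStronglyISPRing A := by
  intro I hI
  obtain ⟨L, hL, rfl⟩ := hA I hI
  have htop : (⊤ : Ideal A).IsInvertibleIdeal :=
    ⟨⟨1, Submodule.mem_top, one_mem _⟩, Ideal.fg_top A, fun M hM => by
      have := hM.isPrime
      rw [Ideal.map_top]
      infer_instance⟩
  refine ⟨⊤, L, htop, ?_, fun P hP => ⟨(hL P hP).ne_top, (hL P hP).isRadical⟩, ?_⟩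
  · rintro rfl
    exact hI (by rw [List.prod_nil, Ideal.one_eq_top])
  · rw [Ideal.top_mul]

end Products

section SquareOfMaximalIdeal

variable {A : Type*} [CommRing A] {M : Ideal A}

theorem IsStronglyISPRing.sq_wcovBy (hA : IsStronglyISPRing A) (hM : M.IsMaximal) :
    M ^ 2 ⩿ M := by
  refine wcovBy_iff_le_and_eq_or_eq.2 ⟨Ideal.pow_le_self two_ne_zero, fun I hMI hIM => ?_⟩
  obtain ⟨J, L, -, hL, hrad, hI⟩ := hA I (ne_top_of_le_ne_top hM.ne_top hIM)
  have heq : ∀ H ∈ L, H = M := by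
    intro H hH
    have hsq : M ^ 2 ≤ H :=
      hMI.trans (hI.le.trans (Ideal.mul_le_right.trans (list_prod_le_of_mem hH)))
    have hMH : M ≤ H := fun x hx => (hrad H hH).2 ⟨2, hsq (Ideal.pow_mem_pow hx 2)⟩
    exact (hM.eq_of_le (hrad H hH).1 hMH).symm
  rw [List.prod_eq_pow_card L M heq] at hI
  have hpos : 0 < L.length := List.length_pos_iff.2 hL
  obtain hlen | hlen : L.length = 1 ∨ 2 ≤ L.length := by lia
  · rw [hlen, pow_one] at hI
    by_cases hJM : J ≤ M
    · left
      refine le_antisymm ?_ hMI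
      rw [hI, sq]
      exact Ideal.mul_mono_left hJM
    · right
      have hsup : J ⊔ M ^ 2 = ⊤ :=
        Ideal.sup_pow_eq_top (by rw [sup_comm]; exact hM.1.2 _ (left_lt_sup.2 hJM))
      have hJ : J = ⊤ := by
        rw [← hsup, left_eq_sup]
        exact hMI.trans (hI.le.trans Ideal.mul_le_left)
      rw [hI, hJ, Ideal.top_mul]
  · left
    refine le_antisymm ?_ hMI
    rw [hI]
    exact Ideal.mul_le_right.trans (Ideal.pow_le_pow_right hlen)

theorem exists_le_span_singleton_sup_sq (h : M ^ 2 ⩿ M) :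
    ∃ p ∈ M, M ≤ Ideal.span {p} ⊔ M ^ 2 := by
  by_cases hM : M ≤ M ^ 2
  · exact ⟨0, M.zero_mem, hM.trans le_sup_right⟩
  · obtain ⟨p, hp, hp'⟩ := SetLike.not_le_iff_exists.1 hM
    have hle : Ideal.span {p} ⊔ M ^ 2 ≤ M :=
      sup_le ((Ideal.span_singleton_le_iff_mem _).2 hp) h.le
    obtain heq | heq := (wcovBy_iff_le_and_eq_or_eq.1 h).2 _ le_sup_right hle
    · exact absurd (heq.le (Ideal.mem_sup_left (Ideal.mem_span_singleton_self p))) hp'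
    · exact ⟨p, hp, heq.ge⟩

theorem mul_colon_eq_of_sq_wcovBy {I : Ideal A} (hfg : M.FG) (h : M ^ 2 ⩿ M) (hI : I ≤ M) :
    M * I.colon M = I := by
  refine le_antisymm (Ideal.mul_le.2 fun m hm y hy => ?_) fun x hx => ?_
  · rw [mul_comm]
    exact Submodule.mem_colon.1 hy m hm
  obtain ⟨p, hp, hpM⟩ := exists_le_span_singleton_sup_sq h
  -- Nakayama: after inverting `s`, which is `1` modulo `M`, the ideal `M` is generated by `p`.
  obtain ⟨s, hs, hsM⟩ : ∃ s : A, s - 1 ∈ M ∧ ∀ m ∈ M, s * m ∈ Ideal.span {p} := by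
    obtain ⟨s, hs, hle⟩ := Submodule.exists_sub_one_mem_and_smul_le_of_fg_of_le_sup
      (I := M) (N := Ideal.span {p}) hfg le_rfl (by rwa [smul_eq_mul, ← sq])
    exact ⟨s, hs, fun m hm => hle (Submodule.smul_mem_pointwise_smul _ _ _ hm)⟩
  obtain ⟨y, hy⟩ := Ideal.mem_span_singleton'.1 (hsM x (hI hx))
  have hsy : s * y ∈ I.colon M := by
    refine Submodule.mem_colon.2 fun m hm => ?_
    obtain ⟨z, hz⟩ := Ideal.mem_span_singleton'.1 (hsM m hm)
    have hsym : (s * y) • m = z * s * x := by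
      rw [smul_eq_mul]
      linear_combination (-y) * hz + z * hy
    rw [hsym]
    exact I.mul_mem_left _ hx
  have hx_split : x = p * (s * y) - (s + 1) * ((s - 1) * x) := by
    linear_combination (-s) * hy
  rw [hx_split]
  exact sub_mem (Ideal.mul_mem_mul hp hsy)
    (Ideal.mul_mem_left _ _ (Ideal.mul_mem_mul hs (Ideal.le_colon hx)))

theorem isIdempotentElem_of_forall_mul_eq_self {I : Ideal A} (hfg : I.FG)
    (h : ∀ M : Ideal A, M.IsMaximal → I ≤ M → M * I = I) : IsIdempotentElem I := by
  have htop : I ⊔ Submodule.annihilator I = ⊤ := by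
    by_contra hne
    obtain ⟨M, hM, hle⟩ := Ideal.exists_le_maximal _ hne
    obtain ⟨r, hr, hr0⟩ := Submodule.exists_sub_one_mem_and_smul_eq_zero_of_fg_of_le_smul
      M I hfg (h M hM (le_sup_left.trans hle)).ge
    have hrM : r ∈ M := hle (Ideal.mem_sup_right (Submodule.mem_annihilator.2 hr0))
    have hone : (1 : A) ∈ M := by simpa only [sub_sub_cancel] using sub_mem hrM hr
    exact hM.ne_top ((Ideal.eq_top_iff_one _).2 hone)
  calc I * I = (I ⊔ Submodule.annihilator I) * I := by
        rw [Ideal.sup_mul, Submodule.annihilator_mul, sup_bot_eq]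
    _ = I := by rw [htop, Ideal.top_mul]

theorem sup_span_singleton_mul_sup_span_singleton {I : Ideal A} (hI : IsIdempotentElem I)
    {a b : A} (hab : a * b ∈ I) : (I ⊔ Ideal.span {a}) * (I ⊔ Ideal.span {b}) = I := by
  refine le_antisymm ?_ (hI.ge.trans (Ideal.mul_mono le_sup_left le_sup_left))
  rw [Ideal.sup_mul, Ideal.mul_sup (Ideal.span {a}), Ideal.span_singleton_mul_span_singleton]
  exact sup_le Ideal.mul_le_left
    (sup_le Ideal.mul_le_right ((Ideal.span_singleton_le_iff_mem _).2 hab))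

theorem isZPIRing_of_forall_sq_wcovBy [IsNoetherianRing A]
    (h : ∀ M : Ideal A, M.IsMaximal → M ^ 2 ⩿ M) : IsZPIRing A := by
  refine isZPIRing_iff_forall_mem_closure.2 fun I => ?_
  induction I using WellFoundedGT.induction with
  | ind I ih =>
  by_cases hprime : I.IsPrime
  · exact Submonoid.subset_closure hprime
  by_cases htop : I = ⊤
  · rw [htop, ← Ideal.one_eq_top]
    exact one_mem _
  by_cases hcolon : ∃ M : Ideal A, M.IsMaximal ∧ I ≤ M ∧ I < I.colon M
  · obtain ⟨M, hM, hIM, hlt⟩ := hcolon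
    rw [← mul_colon_eq_of_sq_wcovBy (IsNoetherian.noetherian M) (h M hM) hIM]
    exact mul_mem (Submonoid.subset_closure hM.isPrime) (ih _ hlt)
  · have hidem : IsIdempotentElem I := by
      refine isIdempotentElem_of_forall_mul_eq_self (IsNoetherian.noetherian I) fun M hM hIM => ?_
      have hI : I = I.colon M := by
        by_contra hne
        exact hcolon ⟨M, hM, hIM, lt_of_le_of_ne Ideal.le_colon hne⟩
      calc M * I = M * I.colon M := by rw [← hI]
        _ = I := mul_colon_eq_of_sq_wcovBy (IsNoetherian.noetherian M) (h M hM) hIM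
    have hlt : ∀ c ∉ I, I < I ⊔ Ideal.span {c} := fun c hc =>
      left_lt_sup.2 fun hle => hc ((Ideal.span_singleton_le_iff_mem _).1 hle)
    obtain ⟨a, ha, b, hb, hab⟩ := (Ideal.not_isPrime_iff.1 hprime).resolve_left htop
    rw [← sup_span_singleton_mul_sup_span_singleton hidem hab]
    exact mul_mem (ih _ (hlt a ha)) (ih _ (hlt b hb))

end SquareOfMaximalIdeal

section Transfer

variable {A B : Type*} [CommRing A] [CommRing B]

theorem IsZPIRing.of_map (hA : IsZPIRing A) (f : A →+* B)
    (hcomap : ∀ J : Ideal B, (J.comap f).map f = J)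
    (hprime : ∀ P : Ideal A, P.IsPrime → RingHom.ker f ≤ P → P.map f = ⊤ ∨ (P.map f).IsPrime) :
    IsZPIRing B := by
  refine isZPIRing_iff_forall_mem_closure.2 fun J => ?_
  obtain ⟨L, hL, hLJ⟩ := hA.exists_list_prod_eq (J.comap f)
  rw [← hcomap J, ← hLJ, ← Ideal.mapHom_apply, map_list_prod]
  refine Submonoid.list_prod_mem _ fun Q hQ => ?_
  obtain ⟨P, hP, rfl⟩ := List.mem_map.1 hQ
  have hker : RingHom.ker f ≤ P :=
    (Ideal.comap_mono bot_le).trans (hLJ.ge.trans (list_prod_le_of_mem hP))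
  obtain htop | hPB := hprime P (hL P hP) hker
  · rw [Ideal.mapHom_apply, htop, ← Ideal.one_eq_top]
    exact one_mem _
  · exact Submonoid.subset_closure hPB

theorem IsZPIRing.quotient (hA : IsZPIRing A) (I : Ideal A) : IsZPIRing (A ⧸ I) :=
  hA.of_map (Ideal.Quotient.mk I)
    (Ideal.map_comap_of_surjective _ Ideal.Quotient.mk_surjective)
    fun _ _ hker => .inr (Ideal.map_isPrime_of_surjective Ideal.Quotient.mk_surjective hker)

theorem IsZPIRing.localization_atPrime (hA : IsZPIRing A) (Q : Ideal A) [Q.IsPrime] :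
    IsZPIRing (Localization.AtPrime Q) := by
  refine hA.of_map (algebraMap A _) (IsLocalization.map_under Q.primeCompl _) fun P hP _ => ?_
  by_cases hPQ : P ≤ Q
  · exact .inr (Ideal.isPrime_map_of_isLocalizationAtPrime Q hPQ)
  · exact .inl (IsLocalization.AtPrime.map_eq_top_of_not_le _ hPQ)

end Transfer

section LocalDomain

open IsLocalRing

variable {R : Type*} [CommRing R]

theorem isPrincipal_maximalIdeal_of_fg_of_sq_wcovBy [IsLocalRing R]
    (hfg : (maximalIdeal R).FG) (h : maximalIdeal R ^ 2 ⩿ maximalIdeal R) :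
    (maximalIdeal R).IsPrincipal := by
  obtain ⟨p, hp, hle⟩ := exists_le_span_singleton_sup_sq h
  refine ⟨p, le_antisymm ?_ ((Ideal.span_singleton_le_iff_mem _).2 hp)⟩
  exact Submodule.le_of_le_smul_of_le_jacobson_bot hfg (maximalIdeal_le_jacobson ⊥)
    (by rwa [smul_eq_mul, ← sq])

theorem maximalIdeal_eq_span_singleton_of_prime_of_isPrincipal [IsDomain R] [IsLocalRing R]
    (h : (maximalIdeal R).IsPrincipal) {p : R} (hp : Prime p) :
    maximalIdeal R = Ideal.span {p} := by
  obtain ⟨q, hq : maximalIdeal R = Ideal.span {q}⟩ := h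
  have hqp : q ∣ p := by
    rw [← Ideal.mem_span_singleton, ← hq]
    exact hp.not_isUnit
  have hq_unit : ¬ IsUnit q := by
    rw [← mem_nonunits_iff, ← mem_maximalIdeal, hq]
    exact Ideal.mem_span_singleton_self q
  rw [hq, Ideal.span_singleton_eq_span_singleton]
  exact (hp.irreducible.dvd_iff.1 hqp).resolve_left hq_unit |>.symm

theorem isPrincipal_of_mul_eq_span_singleton [IsDomain R]
    (hfin : {M : Ideal R | M.IsMaximal}.Finite) {I J : Ideal R} {x : R} (hx : x ≠ 0)
    (h : I * J = Ideal.span {x}) : I.IsPrincipal := by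
  let K := FractionRing R
  have hxK : algebraMap R K x ≠ 0 := by simpa using hx
  have hunit : (I : FractionalIdeal (nonZeroDivisors R) K) *
      ((J : FractionalIdeal (nonZeroDivisors R) K) *
        FractionalIdeal.spanSingleton _ (algebraMap R K x)⁻¹) = 1 := by
    rw [← mul_assoc, ← FractionalIdeal.coeIdeal_mul, h, FractionalIdeal.coeIdeal_span_singleton,
      FractionalIdeal.spanSingleton_mul_spanSingleton, mul_inv_cancel₀ hxK,
      FractionalIdeal.spanSingleton_one]
  exact Ideal.IsPrincipal.of_finite_maximals_of_isUnit hfin (IsUnit.of_mul_eq_one _ hunit)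

theorem IsZPIRing.exists_prime_of_not_isField [IsDomain R] [IsLocalRing R]
    (hR : IsZPIRing R) (h : ¬ IsField R) : ∃ q : R, Prime q := by
  obtain ⟨x, hx, hx0⟩ := Submodule.exists_mem_ne_zero_of_ne_bot
    (isField_iff_maximalIdeal_eq.not.1 h)
  have hne : Ideal.span {x} ≠ ⊤ := fun htop => hx (Ideal.span_singleton_eq_top.1 htop)
  obtain ⟨L, hL, hLx⟩ := hR _ hne
  match L with
  | [] => exact absurd (by rw [hLx, List.prod_nil, Ideal.one_eq_top]) hne
  | P :: L =>
    rw [List.prod_cons] at hLx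
    have hfin : {M : Ideal R | M.IsMaximal}.Finite :=
      (Set.finite_singleton (maximalIdeal R)).subset fun _ hM => eq_maximalIdeal hM
    obtain ⟨q, hq : P = Ideal.span {q}⟩ := isPrincipal_of_mul_eq_span_singleton hfin hx0 hLx.symm
    have hq0 : q ≠ 0 := by
      rintro rfl
      rw [hq, Ideal.span_singleton_zero, Ideal.bot_mul, Ideal.span_singleton_eq_bot] at hLx
      exact hx0 hLx
    exact ⟨q, (Ideal.span_singleton_prime hq0).1 (hq ▸ hL P List.mem_cons_self)⟩

theorem IsZPIRing.eq_span_singleton_of_fg_of_prime_mem [IsDomain R]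
    (hR : IsZPIRing R) {p : R} (hp : Prime p) {Q : Ideal R} [Q.IsPrime] (hQ : Q.FG)
    (hpQ : p ∈ Q) : Q = Ideal.span {p} := by
  let S := Localization.AtPrime Q
  have : IsDomain S := IsLocalization.isDomain_of_atPrime S Q
  have hpQ' : Ideal.span {p} ≤ Q := (Ideal.span_singleton_le_iff_mem _).2 hpQ
  have hp_prime : (Ideal.span {p}).IsPrime := (Ideal.span_singleton_prime hp.ne_zero).2 hp
  have hpS : Prime (algebraMap R S p) := by
    rw [← Ideal.span_singleton_prime
      ((IsLocalization.injective S Q.primeCompl_le_nonZeroDivisors).ne_iff' (map_zero _) |>.2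
        hp.ne_zero), ← Set.image_singleton, ← Ideal.map_span]
    exact Ideal.isPrime_map_of_isLocalizationAtPrime Q hpQ'
  have hmax : Q.map (algebraMap R S) = maximalIdeal S := Localization.AtPrime.map_eq_maximalIdeal
  have hprincipal : (maximalIdeal S).IsPrincipal :=
    isPrincipal_maximalIdeal_of_fg_of_sq_wcovBy (hmax ▸ hQ.map _)
      ((hR.localization_atPrime Q).isStronglyISPRing.sq_wcovBy (maximalIdeal.isMaximal S))
  have hmap : Q.map (algebraMap R S) = (Ideal.span {p}).map (algebraMap R S) := by
    rw [hmax, maximalIdeal_eq_span_singleton_of_prime_of_isPrincipal hprincipal hpS, Ideal.map_span,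
      Set.image_singleton]
  rw [← Ideal.under_map_of_isLocalizationAtPrime (S := S) Q hpQ', ← hmap,
    Ideal.under_map_of_isLocalizationAtPrime Q le_rfl]

theorem IsZPIRing.maximalIdeal_eq_span_singleton_of_prime [IsDomain R] [IsLocalRing R]
    (hR : IsZPIRing R) {p : R} (hp : Prime p) : maximalIdeal R = Ideal.span {p} := by
  have hP : (Ideal.span {p}).IsPrime := (Ideal.span_singleton_prime hp.ne_zero).2 hp
  let π := Ideal.Quotient.mk (Ideal.span {p})
  have hπ : Function.Surjective π := Ideal.Quotient.mk_surjective
  have : IsLocalRing (R ⧸ Ideal.span {p}) := .of_surjective' π hπ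
  suffices hfield : IsField (R ⧸ Ideal.span {p}) from
    (eq_maximalIdeal (Ideal.Quotient.maximal_of_isField _ hfield)).symm
  -- Otherwise a prime `b` of `R ⧸ (p)` gives a finitely generated prime `(b, p)` that strictly
  -- contains `(p)`.
  by_contra hfield
  obtain ⟨b', hb'⟩ := (hR.quotient _).exists_prime_of_not_isField hfield
  obtain ⟨b, rfl⟩ := hπ b'
  have hcomap : (Ideal.span {π b}).comap π = Ideal.span {b} ⊔ Ideal.span {p} := by
    rw [← Set.image_singleton, ← Ideal.map_span, Ideal.comap_map_of_surjective' π hπ,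
      Ideal.mk_ker]
  have hQ : (Ideal.span {b} ⊔ Ideal.span {p}).IsPrime := by
    have := (Ideal.span_singleton_prime hb'.ne_zero).2 hb'
    rw [← hcomap]
    exact Ideal.comap_isPrime π _
  have heq := hR.eq_span_singleton_of_fg_of_prime_mem hp
    ((Submodule.fg_span_singleton b).sup (Submodule.fg_span_singleton p))
    (Ideal.mem_sup_right (Ideal.mem_span_singleton_self p))
  exact hb'.ne_zero (Ideal.Quotient.eq_zero_iff_mem.2
    (heq.le (Ideal.mem_sup_left (Ideal.mem_span_singleton_self b))))

theorem IsZPIRing.maximalIdeal_eq_bot_of_le_sq [IsDomain R] [IsLocalRing R]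
    (hR : IsZPIRing R) (h : maximalIdeal R ≤ maximalIdeal R ^ 2) : maximalIdeal R = ⊥ := by
  by_cases hfield : IsField R
  · exact isField_iff_maximalIdeal_eq.1 hfield
  obtain ⟨q, hq⟩ := hR.exists_prime_of_not_isField hfield
  have hfg : (maximalIdeal R).FG := by
    rw [hR.maximalIdeal_eq_span_singleton_of_prime hq]
    exact Submodule.fg_span_singleton q
  exact Submodule.eq_bot_of_le_smul_of_le_jacobson_bot _ _ hfg (by rwa [smul_eq_mul, ← sq])
    (maximalIdeal_le_jacobson ⊥)

end LocalDomain

section LocalRing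

open IsLocalRing

variable {R : Type*} [CommRing R] [IsLocalRing R]

theorem IsZPIRing.eq_maximalIdeal_of_le_sup_sq (hR : IsZPIRing R) {Q : Ideal R}
    (hQ : Q.IsPrime) (h : maximalIdeal R ≤ Q ⊔ maximalIdeal R ^ 2) : Q = maximalIdeal R := by
  let π := Ideal.Quotient.mk Q
  have hπ : Function.Surjective π := Ideal.Quotient.mk_surjective
  have : IsLocalRing (R ⧸ Q) := .of_surjective' π hπ
  have hQm : Q ≤ maximalIdeal R := le_maximalIdeal hQ.ne_top
  have hmax : (maximalIdeal R).map π = maximalIdeal (R ⧸ Q) :=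
    eq_maximalIdeal ((maximalIdeal.isMaximal R).map_of_surjective_of_ker_le hπ
      (by rwa [Ideal.mk_ker]))
  have hsq : maximalIdeal (R ⧸ Q) ≤ maximalIdeal (R ⧸ Q) ^ 2 := by
    rw [← hmax, ← Ideal.map_pow]
    refine (Ideal.map_mono h).trans ?_
    rw [Ideal.map_sup, Ideal.map_quotient_self, bot_sup_eq]
  refine le_antisymm hQm ?_
  rw [← Ideal.mk_ker (I := Q), ← Ideal.map_eq_bot_iff_le_ker, hmax]
  exact (hR.quotient Q).maximalIdeal_eq_bot_of_le_sq hsq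

theorem IsZPIRing.isPrincipal_maximalIdeal (hR : IsZPIRing R) :
    (maximalIdeal R).IsPrincipal := by
  obtain ⟨p, hp, hle⟩ := exists_le_span_singleton_sup_sq
    (hR.isStronglyISPRing.sq_wcovBy (maximalIdeal.isMaximal R))
  have hpm : Ideal.span {p} ≤ maximalIdeal R := (Ideal.span_singleton_le_iff_mem _).2 hp
  refine ⟨p, le_antisymm ?_ hpm⟩
  obtain ⟨L, hL, hLp⟩ := hR.exists_list_prod_eq (Ideal.span {p})
  have heq : ∀ P ∈ L, P = maximalIdeal R := fun P hP =>
    hR.eq_maximalIdeal_of_le_sup_sq (hL P hP)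
      (hle.trans (sup_le_sup_right (hLp.ge.trans (list_prod_le_of_mem hP)) _))
  rw [List.prod_eq_pow_card L _ heq] at hLp
  change maximalIdeal R ≤ Ideal.span {p}
  rw [← hLp] at hle ⊢
  obtain hlen | hlen : L.length ≤ 1 ∨ 2 ≤ L.length := by lia
  · simpa only [pow_one] using Ideal.pow_le_pow_right (I := maximalIdeal R) hlen
  · have hsq : maximalIdeal R ≤ maximalIdeal R ^ 2 :=
      hle.trans (sup_le (Ideal.pow_le_pow_right hlen) le_rfl)
    have hidem : IsIdempotentElem (maximalIdeal R) := by
      rw [IsIdempotentElem, ← sq]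
      exact le_antisymm (Ideal.pow_le_self two_ne_zero) hsq
    exact (hidem.pow_eq (by lia)).ge

theorem IsZPIRing.eq_bot_or_eq_maximalIdeal (hR : IsZPIRing R) {P : Ideal R} (hP : P.IsPrime) :
    P = ⊥ ∨ P = maximalIdeal R := by
  obtain ⟨q, hq : maximalIdeal R = Ideal.span {q}⟩ := hR.isPrincipal_maximalIdeal
  by_cases hqP : q ∈ P
  · right
    refine le_antisymm (le_maximalIdeal hP.ne_top) ?_
    rw [hq]
    exact (Ideal.span_singleton_le_iff_mem _).2 hqP
  left
  refine eq_bot_iff.2 fun x hx => ?_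
  obtain ⟨L, hL, hLx⟩ := hR.exists_list_prod_eq (Ideal.span {x})
  obtain ⟨P', hP'L, hP'P⟩ := exists_mem_le_of_list_prod_le (P := P)
    (hLx.le.trans ((Ideal.span_singleton_le_iff_mem _).2 hx))
  have hP' : P' ≤ maximalIdeal R * P' := by
    intro y hy
    obtain ⟨z, rfl⟩ := Ideal.mem_span_singleton'.1
      (hq.le (le_maximalIdeal (hL P' hP'L).ne_top hy))
    have hz : z ∈ P' := ((hL P' hP'L).mem_or_mem hy).resolve_right fun h => hqP (hP'P h)
    rw [hq, mul_comm z]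
    exact Ideal.mul_mem_mul (Ideal.mem_span_singleton_self q) hz
  obtain ⟨J, hJ⟩ := List.dvd_prod hP'L
  have hxle : Ideal.span {x} ≤ maximalIdeal R * Ideal.span {x} := by
    rw [← hLx, hJ, ← mul_assoc]
    exact Ideal.mul_mono_left hP'
  have hbot := Submodule.eq_bot_of_le_smul_of_le_jacobson_bot _ _
    (Submodule.fg_span_singleton x) hxle (maximalIdeal_le_jacobson ⊥)
  exact hbot ▸ Ideal.mem_span_singleton_self x

end LocalRing

section Noetherian

variable {A : Type*} [CommRing A]

theorem exists_fg_le_map_eq {B : Type*} [CommRing B] (f : A →+* B) {I : Ideal A}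
    (h : (I.map f).FG) : ∃ F ≤ I, F.FG ∧ F.map f = I.map f := by
  classical
  obtain ⟨t, htI, ht⟩ := (Submodule.fg_span_iff_fg_span_finset_subset _).1 h
  obtain ⟨s, hsI, hst⟩ := Finset.subset_set_image_iff.1 htI
  refine ⟨Ideal.span s, Ideal.span_le.2 hsI, ⟨s, rfl⟩, ?_⟩
  rw [Ideal.map_span, ← Finset.coe_image, hst]
  exact ht.symm

theorem le_of_map_localization_atPrime_le {I Q M : Ideal A} [M.IsPrime] [Q.IsPrime]
    (hQM : Q ≤ M) (h : I.map (algebraMap A (Localization.AtPrime M)) ≤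
      Q.map (algebraMap A (Localization.AtPrime M))) : I ≤ Q := by
  rw [← Ideal.under_map_of_isLocalizationAtPrime (S := Localization.AtPrime M) M hQM]
  exact Ideal.map_le_iff_le_comap.1 h

theorem IsZPIRing.exists_sup_eq_top_of_forall_map_le (hA : IsZPIRing A) {F I : Ideal A}
    (hloc : ∀ (M : Ideal A) [M.IsMaximal], I ≤ M →
      I.map (algebraMap A (Localization.AtPrime M)) ≤
        F.map (algebraMap A (Localization.AtPrime M))) :
    ∃ K : Ideal A, I ⊔ K = ⊤ ∧ ∀ M : Ideal A, M.IsPrime → F ≤ M → ¬ I ≤ M → K ≤ M := by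
  classical
  obtain ⟨L, hL, hLF⟩ := hA.exists_list_prod_eq F
  refine ⟨(L.filter (¬ I ≤ ·)).prod, ?_, fun M hM hFM hIM => ?_⟩
  · by_contra hne
    obtain ⟨M, hM, hle⟩ := Ideal.exists_le_maximal _ hne
    obtain ⟨Q, hQ, hQM⟩ := exists_mem_le_of_list_prod_le (le_sup_right.trans hle)
    obtain ⟨hQL, hIQ⟩ : Q ∈ L ∧ ¬ I ≤ Q := by simpa using hQ
    have := hL Q hQL
    refine hIQ (le_of_map_localization_atPrime_le hQM ?_)
    exact (hloc M (le_sup_left.trans hle)).trans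
      (Ideal.map_mono (hLF.ge.trans (list_prod_le_of_mem hQL)))
  · obtain ⟨Q, hQL, hQM⟩ := exists_mem_le_of_list_prod_le (hLF.le.trans hFM)
    have hIQ : ¬ I ≤ Q := fun hIQ => hIM (hIQ.trans hQM)
    exact (list_prod_le_of_mem (by simpa using ⟨hQL, hIQ⟩)).trans hQM

theorem IsZPIRing.fg_of_fg_of_forall_map_le (hA : IsZPIRing A) {F I : Ideal A}
    (hF : F.FG) (hFI : F ≤ I)
    (hloc : ∀ (M : Ideal A) [M.IsMaximal], I ≤ M →
      I.map (algebraMap A (Localization.AtPrime M)) ≤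
        F.map (algebraMap A (Localization.AtPrime M))) : I.FG := by
  obtain ⟨K, hsup, hK⟩ := hA.exists_sup_eq_top_of_forall_map_le hloc
  obtain ⟨p, hp, k, hk, hpk⟩ := Submodule.mem_sup.1 ((Ideal.eq_top_iff_one _).1 hsup)
  have heq : I = F ⊔ Ideal.span {p} := by
    refine le_antisymm (Ideal.le_of_localization_maximal fun M hM => ?_)
      (sup_le hFI ((Ideal.span_singleton_le_iff_mem _).2 hp))
    by_cases hIM : I ≤ M
    · exact (hloc M hIM).trans (Ideal.map_mono le_sup_left)
    · have hnle : ¬ F ⊔ Ideal.span {p} ≤ M := by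
        intro hle
        have hpM : p ∈ M := hle (Ideal.mem_sup_right (Ideal.mem_span_singleton_self p))
        have hkM : k ∈ M := hK M hM.isPrime (le_sup_left.trans hle) hIM hk
        exact hM.ne_top ((Ideal.eq_top_iff_one _).2 (hpk ▸ add_mem hpM hkM))
      rw [IsLocalization.AtPrime.map_eq_top_of_not_le _ hnle]
      exact le_top
  rw [heq]
  exact Submodule.FG.sup hF (Submodule.fg_span_singleton p)

theorem IsZPIRing.map_localization_atPrime_eq_bot (hA : IsZPIRing A) {P M : Ideal A}
    [hP : P.IsPrime] [M.IsPrime] (hlt : P < M) :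
    P.map (algebraMap A (Localization.AtPrime M)) = ⊥ := by
  have hprime : (P.map (algebraMap A (Localization.AtPrime M))).IsPrime :=
    Ideal.isPrime_map_of_isLocalizationAtPrime M hlt.le
  refine ((hA.localization_atPrime M).eq_bot_or_eq_maximalIdeal hprime).resolve_right fun h => ?_
  rw [← Localization.AtPrime.map_eq_maximalIdeal] at h
  exact hlt.not_ge (le_of_map_localization_atPrime_le hlt.le h.ge)

theorem IsZPIRing.fg_of_isPrime (hA : IsZPIRing A) {P : Ideal A} (hP : P.IsPrime) : P.FG := by
  by_cases hmax : P.IsMaximal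
  · have hfg : (P.map (algebraMap A (Localization.AtPrime P))).FG := by
      rw [Localization.AtPrime.map_eq_maximalIdeal]
      exact (hA.localization_atPrime P).isPrincipal_maximalIdeal.fg
    obtain ⟨F, hFP, hF, hmap⟩ := exists_fg_le_map_eq _ hfg
    refine hA.fg_of_fg_of_forall_map_le hF hFP fun M hM hPM => ?_
    obtain rfl := hmax.eq_of_le hM.ne_top hPM
    exact hmap.ge
  · refine hA.fg_of_fg_of_forall_map_le Submodule.fg_bot bot_le fun M hM hPM => ?_
    have hlt : P < M := lt_of_le_of_ne hPM fun h => hmax (h ▸ hM)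
    rw [hA.map_localization_atPrime_eq_bot hlt]
    exact bot_le

theorem IsZPIRing.isNoetherianRing (hA : IsZPIRing A) : IsNoetherianRing A :=
  .of_prime fun _ hP => hA.fg_of_isPrime hP

end Noetherian

/-- A ring is a ZPI-ring (every proper ideal is a product of prime ideals) if and only
if it is a Noetherian strongly ISP-ring. -/
theorem zpi_iff_noetherian_stronglyISPRing {A : Type*} [CommRing A] :
    (∀ I : Ideal A, I ≠ ⊤ →
        ∃ L : List (Ideal A), (∀ P ∈ L, P.IsPrime) ∧ I = L.prod) ↔
      (IsNoetherianRing A ∧ IsStronglyISPRing A) := by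
  constructor
  · intro hA
    exact ⟨IsZPIRing.isNoetherianRing hA, IsZPIRing.isStronglyISPRing hA⟩
  · rintro ⟨_, hA⟩
    exact isZPIRing_of_forall_sq_wcovBy fun _ hM => hA.sq_wcovBy hM
end
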